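/- For any n ≥ 2k ≥ 2 and any function c from the k-element subsets of {1,...,n} to {1,...,n-2k+1}, there exist two disjoint k-element subsets A and B of {1,...,n} with c(A) = c(B). -/

import Mathlib

namespace KL

abbrev V := Finset ℕ × Finset ℕ

/-- coboundary -/
def del {T : Type} : (List T → ZMod 2) → List T → ZMod 2
  | _, [] => 0
  | φ, x :: l => φ l + del (fun t => φ (x :: t)) l

def up (d : ℕ) (X : V) : V := (insert d X.1, X.2)

/-- dual of the cone operator -/
def cone (d : ℕ) : (List V → ZMod 2) → List V → ZMod 2
  | φ, [] => φ [({d}, ∅)]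
  | φ, X :: l => φ (up d X :: X :: l) + cone d (fun t => φ (up d X :: t)) l

def sg (φ : List V → ZMod 2) : List V → ZMod 2 := fun l => φ (l.map Prod.swap)

def Z : ℕ → (List V → ZMod 2) → ZMod 2
  | 0, φ => φ []
  | d + 1, φ => Z d (cone (d + 1) φ) + Z d (cone (d + 1) (sg φ))

theorem del_add {T : Type} (φ ψ : List T → ZMod 2) (l : List T) :
    del (fun t => φ t + ψ t) l = del φ l + del ψ l := by
  induction l generalizing φ ψ with
  | nil => simp [del]
  | cons x l ih => simp only [del, ih]; ring

theorem cone_add (d : ℕ) (φ ψ : List V → ZMod 2) (l : List V) :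
    cone d (fun t => φ t + ψ t) l = cone d φ l + cone d ψ l := by
  induction l generalizing φ ψ with
  | nil => simp [cone]
  | cons x l ih => simp only [cone, ih]; ring

theorem Z_add (d : ℕ) (φ ψ : List V → ZMod 2) :
    Z d (fun t => φ t + ψ t) = Z d φ + Z d ψ := by
  induction d generalizing φ ψ with
  | zero => simp [Z]
  | succ d ih =>
    have h1 : cone (d+1) (fun t => φ t + ψ t) = fun t => cone (d+1) φ t + cone (d+1) ψ t :=
      funext fun l => cone_add _ _ _ l
    have h2 : cone (d+1) (sg (fun t => φ t + ψ t))
        = fun t => cone (d+1) (sg φ) t + cone (d+1) (sg ψ) t :=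
      funext fun l => cone_add _ (sg φ) (sg ψ) l
    simp only [Z, h1, h2, ih]; ring

theorem del_map {S T : Type} (f : S → T) (φ : List T → ZMod 2) (l : List S) :
    del (fun t => φ (t.map f)) l = del φ (l.map f) := by
  induction l generalizing φ with
  | nil => simp [del]
  | cons x l ih =>
    simp only [del, List.map_cons]
    rw [ih (fun t => φ (f x :: t))]

theorem two_zero (a : ZMod 2) : a + a = 0 := CharTwo.add_self_eq_zero a

theorem cone_del (d : ℕ) (φ : List V → ZMod 2) (l : List V) :
    cone d (del φ) l = φ l + del (cone d φ) l := by
  induction l generalizing φ with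
  | nil => simp [cone, del]
  | cons X l ih =>
    have h1 : (fun t => del φ (up d X :: t))
        = fun t => φ t + del (fun s => φ (up d X :: s)) t := rfl
    have h2 : (fun t => cone d φ (X :: t))
        = fun t => φ (up d X :: X :: t) + cone d (fun s => φ (up d X :: s)) t := rfl
    simp only [cone, del]
    rw [cone_add, ih, del_add]
    linear_combination two_zero (φ (up d X :: l))

theorem Z_sg (d : ℕ) (φ : List V → ZMod 2) : Z d (sg φ) = Z d φ := by
  cases d with
  | zero => simp [Z, sg]
  | succ d =>
    have : sg (sg φ) = φ := by
      funext l; simp [sg]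
    simp only [Z, this]; ring

theorem Z_del (d : ℕ) (φ : List V → ZMod 2) : Z d (del φ) = 0 := by
  induction d generalizing φ with
  | zero => simp [Z, del]
  | succ d ih =>
    have h0 : sg (del φ) = del (sg φ) := by
      funext l; exact (del_map _ φ l).symm
    have h (φ) : cone (d+1) (del φ) = fun t => φ t + del (cone (d+1) φ) t :=
      funext fun l => cone_del _ _ l
    simp only [Z, h0, h, Z_add, ih, Z_sg]
    simp [two_zero]

def GoodV (d : ℕ) (X : V) : Prop :=
  X.1 ⊆ Finset.Icc 1 d ∧ X.2 ⊆ Finset.Icc 1 d ∧ Disjoint X.1 X.2 ∧ (X.1 ∪ X.2).Nonempty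

def Good (d : ℕ) (l : List V) : Prop :=
  l.Pairwise (fun X Y => Y ≤ X) ∧ ∀ X ∈ l, GoodV d X

theorem goodV_mono {d : ℕ} {X : V} (h : GoodV d X) : GoodV (d+1) X := by
  have : Finset.Icc 1 d ⊆ Finset.Icc 1 (d+1) := Finset.Icc_subset_Icc_right (by omega)
  exact ⟨h.1.trans this, h.2.1.trans this, h.2.2⟩

theorem goodV_up {d : ℕ} {X : V} (h : GoodV d X) : GoodV (d+1) (up (d+1) X) := by
  have h' := goodV_mono h
  refine ⟨?_, h'.2.1, ?_, ?_⟩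
  · intro x hx
    simp only [up, Finset.mem_insert] at hx
    rcases hx with rfl | hx
    · simp
    · exact h'.1 hx
  · simp only [up, Finset.disjoint_insert_left]
    refine ⟨fun hx => ?_, h.2.2.1⟩
    have := h.2.1 hx
    simp at this
  · exact ⟨d+1, by simp [up]⟩

theorem le_up (d : ℕ) (X : V) : X ≤ up d X :=
  ⟨Finset.subset_insert _ _, le_refl _⟩

theorem up_mono (d : ℕ) {X Y : V} (h : X ≤ Y) : up d X ≤ up d Y :=
  ⟨Finset.insert_subset_insert _ h.1, h.2⟩

theorem cone_congr (d : ℕ) (l : List V) (hl : Good d l) (φ ψ : List V → ZMod 2)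
    (h : ∀ t, Good (d+1) t → t.length = l.length + 1 →
      (∀ X, (∀ Y ∈ l, Y ≤ X) → ∀ Y ∈ t, Y ≤ up (d+1) X) → φ t = ψ t) :
    cone (d+1) φ l = cone (d+1) ψ l := by
  induction l generalizing φ ψ with
  | nil =>
    simp only [cone]
    apply h
    · refine ⟨by simp, ?_⟩
      simp [GoodV]
    · simp
    · intro X _ Y hY
      simp only [List.mem_singleton] at hY
      subst hY
      exact ⟨by simp [up], by simp⟩
  | cons X l ih =>
    obtain ⟨hp, hg⟩ := hl
    rw [List.pairwise_cons] at hp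
    have hX := hg X (by simp)
    have hl' : Good d l := ⟨hp.2, fun Y hY => hg Y (by simp [hY])⟩
    simp only [cone]
    congr 1
    · apply h
      · refine ⟨?_, ?_⟩
        · simp only [List.pairwise_cons, List.mem_cons, forall_eq_or_imp]
          exact ⟨⟨le_up _ _, fun Y hY => (hp.1 Y hY).trans (le_up _ _)⟩, hp.1, hp.2⟩
        · simp only [List.mem_cons, forall_eq_or_imp]
          exact ⟨goodV_up hX, goodV_mono hX, fun Y hY => goodV_mono (hl'.2 Y hY)⟩
      · simp
      · intro W hW
        simp only [List.mem_cons, forall_eq_or_imp] at hW ⊢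
        exact ⟨up_mono _ hW.1, hW.1.trans (le_up _ _), fun Y hY => (hW.2 Y hY).trans (le_up _ _)⟩
    · apply ih hl'
      intro t ht hlen hub
      apply h
      · refine ⟨?_, ?_⟩
        · rw [List.pairwise_cons]
          exact ⟨hub X hp.1, ht.1⟩
        · simp only [List.mem_cons, forall_eq_or_imp]
          exact ⟨goodV_up hX, ht.2⟩
      · simp [hlen]
      · intro W hW
        simp only [List.mem_cons, forall_eq_or_imp] at hW ⊢
        exact ⟨up_mono _ hW.1, hub W hW.2⟩

theorem good_swap {d : ℕ} {l : List V} (h : Good d l) : Good d (l.map Prod.swap) := by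
  refine ⟨?_, ?_⟩
  · rw [List.pairwise_map]
    exact h.1.imp fun hab => ⟨hab.2, hab.1⟩
  · intro X hX
    obtain ⟨Y, hY, rfl⟩ := List.mem_map.1 hX
    obtain ⟨h1, h2, h3, h4⟩ := h.2 Y hY
    exact ⟨h2, h1, h3.symm, by rw [Finset.union_comm]; exact h4⟩

theorem Z_congr (d : ℕ) (φ ψ : List V → ZMod 2)
    (h : ∀ t, Good d t → t.length = d → φ t = ψ t) : Z d φ = Z d ψ := by
  induction d generalizing φ ψ with
  | zero => exact h [] ⟨by simp, by simp⟩ rfl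
  | succ d ih =>
    simp only [Z]
    congr 1
    · apply ih
      intro l hl hlen
      exact cone_congr d l hl _ _ fun t ht ht2 _ => h t ht (by omega)
    · apply ih
      intro l hl hlen
      exact cone_congr d l hl _ _ fun t ht ht2 _ =>
        h _ (good_swap ht) (by simp; omega)

theorem Z_step (d : ℕ) (α : List V → ZMod 2)
    (h : ∀ t, Good (d+1) t → del α t = α t + sg α t) : Z (d+1) α = Z d α := by
  have h1 : cone (d+1) (del α) = fun t => α t + del (cone (d+1) α) t :=
    funext fun l => cone_del _ _ l
  have h2 : Z d (cone (d+1) (del α)) = Z d α := by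
    rw [h1, Z_add, Z_del, add_zero]
  have h3 : Z d (cone (d+1) (del α)) = Z d (fun t => cone (d+1) α t + cone (d+1) (sg α) t) := by
    apply Z_congr
    intro l hl _
    rw [← cone_add]
    exact cone_congr d l hl _ _ fun t ht _ _ => h t ht
  rw [← h2, h3, Z_add]; rfl

/-! Label lists -/

def alt : Bool → List ℕ → ZMod 2
  | _, [] => 1
  | p, x :: l => if (x % 2 == 1) = p then alt (!p) l else 0

theorem del_zero {T : Type} (l : List T) : del (fun _ => 0) l = 0 := by
  induction l with
  | nil => rfl
  | cons x l ih => simp [del, ih]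

theorem del_alt (p : Bool) (l : List ℕ) : del (alt p) l = alt p l + alt (!p) l := by
  induction l generalizing p with
  | nil => simp [del, alt, two_zero]
  | cons x l ih =>
    simp only [del, alt]
    by_cases h : (x % 2 == 1) = p
    · simp only [h, if_true, ih, Bool.not_not]
      have : ¬ (p = !p) := by cases p <;> simp
      rw [if_neg this]
      linear_combination two_zero (alt p l)
    · have h' : (x % 2 == 1) = !p := by
        revert h; cases p <;> cases (x % 2 == 1) <;> simp
      simp only [if_neg h, del_zero, if_pos h', Bool.not_not]
      ring

theorem del_perm {T : Type} {l l' : List T} (hp : l.Perm l') (φ : List T → ZMod 2)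
    (h : ∀ s t : List T, s.Perm t → φ s = φ t) : del φ l = del φ l' := by
  induction hp generalizing φ with
  | nil => rfl
  | cons x hp ih =>
    simp only [del]
    rw [h _ _ hp, ih _ fun s t hst => h _ _ (hst.cons x)]
  | swap x y l =>
    simp only [del]
    have : (fun t => φ (x :: y :: t)) = fun t => φ (y :: x :: t) :=
      funext fun t => h _ _ (List.Perm.swap _ _ _)
    rw [this]; ring
  | trans _ _ ih1 ih2 => rw [ih1 φ h, ih2 φ h]

theorem del_congr {T : Type} (l : List T) (φ ψ : List T → ZMod 2)
    (h : ∀ t, t.Sublist l → φ t = ψ t) : del φ l = del ψ l := by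
  induction l generalizing φ ψ with
  | nil => rfl
  | cons x l ih =>
    simp only [del]
    rw [h l (List.sublist_cons_self x l), ih _ _ fun t ht => h _ (ht.cons_cons x)]

def srt (l : List ℕ) : List ℕ := l.insertionSort (· ≤ ·)

theorem srt_perm (l : List ℕ) : (srt l).Perm l := List.perm_insertionSort _ _

theorem srt_sorted (l : List ℕ) : (srt l).Pairwise (· ≤ ·) := List.pairwise_insertionSort _ _

theorem sorted_unique {l l' : List ℕ} (h : l.Perm l') (h1 : l.Pairwise (· ≤ ·))
    (h2 : l'.Pairwise (· ≤ ·)) : l = l' :=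
  List.Perm.eq_of_pairwise (fun _ _ _ _ h h' => le_antisymm h h') h1 h2 h

theorem srt_eq {l l' : List ℕ} (h : l.Perm l') : srt l = srt l' :=
  sorted_unique ((srt_perm l).trans (h.trans (srt_perm l').symm)) (srt_sorted _) (srt_sorted _)

theorem srt_self {l : List ℕ} (h : l.Pairwise (· ≤ ·)) : srt l = l :=
  sorted_unique (srt_perm l) (srt_sorted _) h

def flip (a : ℕ) : ℕ := if a % 2 = 0 then a + 1 else a - 1

def beta (l : List ℕ) : ZMod 2 := alt false (srt l)

theorem alt_flip (p : Bool) (l : List ℕ) : alt p (l.map flip) = alt (!p) l := by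
  induction l generalizing p with
  | nil => rfl
  | cons x l ih =>
    simp only [List.map_cons, alt, ih]
    have : (flip x % 2 == 1) = !(x % 2 == 1) := by
      unfold flip
      rcases Nat.mod_two_eq_zero_or_one x with h | h
      · rw [if_pos h]; have : (x+1) % 2 = 1 := by omega
        simp [h, this]
      · rw [if_neg (by omega)]; have : (x-1) % 2 = 0 := by omega
        simp [h, this]
    rw [this]
    cases p <;> cases (x % 2 == 1) <;> simp

theorem srt_flip (l : List ℕ) (h : ∀ a ∈ l, ∀ b ∈ l, a / 2 = b / 2 → a = b) :
    srt (l.map flip) = (srt l).map flip := by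
  apply sorted_unique
  · exact (srt_perm _).trans ((srt_perm l).symm.map flip)
  · exact srt_sorted _
  · rw [List.pairwise_map]
    refine (srt_sorted l).imp_of_mem ?_
    intro a b ha hb hab
    have := h a ((srt_perm l).mem_iff.1 ha) b ((srt_perm l).mem_iff.1 hb)
    unfold flip
    split_ifs <;> omega

theorem del_beta (l : List ℕ) (h : ∀ a ∈ l, ∀ b ∈ l, a / 2 = b / 2 → a = b) :
    del beta l = beta l + beta (l.map flip) := by
  have h1 : del beta l = del beta (srt l) :=
    del_perm (srt_perm l).symm _ fun s t hst => by simp only [beta, srt_eq hst]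
  have h2 : del beta (srt l) = del (alt false) (srt l) :=
    del_congr _ _ _ fun t ht => by
      simp only [beta]; rw [srt_self ((srt_sorted l).sublist ht)]
  rw [h1, h2, del_alt]
  simp only [beta]
  rw [srt_flip l h, alt_flip]

theorem alt_nodup (p : Bool) (l : List ℕ) (hs : l.Pairwise (· ≤ ·)) (h : alt p l ≠ 0) :
    l.Nodup := by
  induction l generalizing p with
  | nil => simp
  | cons x l ih =>
    rw [List.pairwise_cons] at hs
    simp only [alt] at h
    split_ifs at h with hx
    · rw [List.nodup_cons]
      refine ⟨?_, ih _ hs.2 h⟩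
      cases l with
      | nil => simp
      | cons y t =>
        intro hm
        have hxy : x ≤ y := hs.1 y (by simp)
        have hyx : y ≤ x := by
          rcases List.mem_cons.1 hm with rfl | hm
          · exact le_refl _
          · exact (List.pairwise_cons.1 hs.2).1 x hm
        have : x = y := le_antisymm hxy hyx
        subst this
        simp only [alt] at h
        rw [if_neg (by rw [hx]; cases p <;> simp)] at h
        exact h rfl
    · exact absurd rfl h

theorem beta_zero (n : ℕ) (hn : 1 ≤ n) (l : List ℕ)
    (h : ∀ a ∈ l, ∀ b ∈ l, a / 2 = b / 2 → a = b)
    (hl : l.length = n) (hr : ∀ a ∈ l, a / 2 ∈ Finset.Icc 1 (n-1)) : beta l = 0 := by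
  by_contra hne
  have hnd : l.Nodup := (srt_perm l).nodup_iff.1 (alt_nodup _ _ (srt_sorted l) hne)
  have h1 : (l.toFinset).card ≤ (Finset.Icc 1 (n-1)).card := by
    apply Finset.card_le_card_of_injOn (fun a => a / 2)
    · intro a ha
      exact hr a (by simpa using ha)
    · intro a ha b hb hab
      exact h a (by simpa using ha) b (by simpa using hb) hab
  rw [List.toFinset_card_of_nodup hnd, hl, Nat.card_Icc] at h1
  omega

theorem tucker (n : ℕ) (hn : 1 ≤ n) (lam : V → ℕ)
    (hr : ∀ X, GoodV n X → lam X / 2 ∈ Finset.Icc 1 (n-1))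
    (ha : ∀ X, GoodV n X → lam X.swap = flip (lam X))
    (hc : ∀ X Y, GoodV n X → GoodV n Y → X ≤ Y → lam X / 2 = lam Y / 2 → lam X = lam Y) :
    False := by
  have hmono : ∀ d, d ≤ n → ∀ X, GoodV d X → GoodV n X := by
    intro d hd X h
    have : Finset.Icc 1 d ⊆ Finset.Icc 1 n := Finset.Icc_subset_Icc_right hd
    exact ⟨h.1.trans this, h.2.1.trans this, h.2.2⟩
  have hnc : ∀ t, Good n t → ∀ a ∈ t.map lam, ∀ b ∈ t.map lam, a / 2 = b / 2 → a = b := by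
    intro t ht
    have : ∀ X ∈ t, ∀ Y ∈ t, lam X / 2 = lam Y / 2 → lam X = lam Y := by
      have hp : t.Pairwise (fun X Y => lam X / 2 = lam Y / 2 → lam X = lam Y) := by
        refine ht.1.imp_of_mem ?_
        intro X Y hX hY hYX h
        exact (hc Y X (ht.2 Y hY) (ht.2 X hX) hYX h.symm).symm
      intro X hX Y hY
      haveI : Std.Symm (fun X Y : V => lam X / 2 = lam Y / 2 → lam X = lam Y) :=
        ⟨fun _ _ h1 h2 => (h1 h2.symm).symm⟩
      exact hp.forall_of_forall (fun _ _ _ => rfl) hX hY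
    intro a haa b hbb
    obtain ⟨X, hX, rfl⟩ := List.mem_map.1 haa
    obtain ⟨Y, hY, rfl⟩ := List.mem_map.1 hbb
    exact this X hX Y hY
  let α : List V → ZMod 2 := fun t => beta (t.map lam)
  have key : ∀ d, d ≤ n → Z d α = 1 := by
    intro d
    induction d with
    | zero => intro _; simp [Z, α, beta, srt, alt]
    | succ d ih =>
      intro hd
      rw [Z_step, ih (by omega)]
      intro t ht
      have ht' : Good n t := ⟨ht.1, fun X hX => hmono _ hd X (ht.2 X hX)⟩
      have e1 : del α t = del beta (t.map lam) := del_map lam beta t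
      rw [e1, del_beta _ (hnc t ht')]
      have : (t.map lam).map flip = (t.map Prod.swap).map lam := by
        rw [List.map_map, List.map_map]
        apply List.map_congr_left
        intro X hX
        exact (ha X (ht'.2 X hX)).symm
      rw [this]; rfl
  have h0 : Z n α = Z n (fun t => (fun _ => (0 : ZMod 2)) t + (fun _ => (0 : ZMod 2)) t) := by
    apply Z_congr
    intro t ht hlen
    simp only [add_zero]
    refine beta_zero n hn _ (hnc t ht) (by simpa using hlen) ?_
    intro a haa
    obtain ⟨X, hX, rfl⟩ := List.mem_map.1 haa
    exact hr X (ht.2 X hX)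
  rw [Z_add, two_zero, key n le_rfl] at h0
  exact one_ne_zero h0

end KL

open KL in
theorem kneser_lovasz (n k : ℕ) (hk : 1 ≤ k) (hn : 2 * k ≤ n)
    (c : Finset ℕ → ℕ)
    (hc : ∀ A ⊆ Finset.Icc 1 n, A.card = k → c A ∈ Finset.Icc 1 (n - 2 * k + 1)) :
    ∃ A B : Finset ℕ, A ⊆ Finset.Icc 1 n ∧ B ⊆ Finset.Icc 1 n ∧
      A.card = k ∧ B.card = k ∧ Disjoint A B ∧ c A = c B := by
  classical
  by_contra hcon
  have hcon' : ∀ A B : Finset ℕ, A ⊆ Finset.Icc 1 n → B ⊆ Finset.Icc 1 n →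
      A.card = k → B.card = k → Disjoint A B → c A ≠ c B := by
    intro A B h1 h2 h3 h4 h5 h6
    exact hcon ⟨A, B, h1, h2, h3, h4, h5, h6⟩
  let sz : V → ℕ := fun X => X.1.card + X.2.card
  let mn : V → ℕ := fun X => sInf {x | x ∈ X.1 ∪ X.2}
  let col : V → ℕ := fun X => sInf {i | ∃ S : Finset ℕ, S.card = k ∧ (S ⊆ X.1 ∨ S ⊆ X.2) ∧ c S = i}
  let P : V → Prop := fun X => ∃ S : Finset ℕ, S.card = k ∧ S ⊆ X.1 ∧ c S = col X
  let lam : V → ℕ := fun X =>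
    if sz X ≤ 2 * k - 2 then 2 * sz X + (if mn X ∈ X.1 then 0 else 1)
    else 2 * (2 * k - 2 + col X) + (if P X then 0 else 1)
  have sz_swap : ∀ X, sz X.swap = sz X := fun X => Nat.add_comm _ _
  have mn_swap : ∀ X, mn X.swap = mn X := by
    intro X; simp only [mn, Prod.fst_swap, Prod.snd_swap, Finset.union_comm]
  have col_swap : ∀ X, col X.swap = col X := by
    intro X; simp only [col, Prod.fst_swap, Prod.snd_swap, or_comm]
  have mn_mem : ∀ X, GoodV n X → mn X ∈ X.1 ∪ X.2 := by
    intro X hX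
    exact Nat.sInf_mem (s := {x | x ∈ X.1 ∪ X.2}) hX.2.2.2
  have col_mem : ∀ X, ¬ sz X ≤ 2 * k - 2 →
      ∃ S : Finset ℕ, S.card = k ∧ (S ⊆ X.1 ∨ S ⊆ X.2) ∧ c S = col X := by
    intro X hs
    apply Nat.sInf_mem (s := {i | ∃ S : Finset ℕ, S.card = k ∧ (S ⊆ X.1 ∨ S ⊆ X.2) ∧ c S = i})
    have : k ≤ X.1.card ∨ k ≤ X.2.card := by
      simp only [sz] at hs; omega
    rcases this with h | h
    · obtain ⟨S, h1, h2⟩ := Finset.exists_subset_card_eq h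
      exact ⟨c S, S, h2, Or.inl h1, rfl⟩
    · obtain ⟨S, h1, h2⟩ := Finset.exists_subset_card_eq h
      exact ⟨c S, S, h2, Or.inr h1, rfl⟩
  have col_rng : ∀ X, GoodV n X → ¬ sz X ≤ 2 * k - 2 → 1 ≤ col X ∧ col X ≤ n - 2 * k + 1 := by
    intro X hX hs
    obtain ⟨S, h1, h2, h3⟩ := col_mem X hs
    rw [← h3]
    refine Finset.mem_Icc.1 (hc S ?_ h1)
    rcases h2 with h | h
    · exact h.trans hX.1
    · exact h.trans hX.2.1
  have sz_pos : ∀ X, GoodV n X → 1 ≤ sz X := by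
    intro X hX
    have h1 := Finset.card_pos.2 hX.2.2.2
    have h2 := Finset.card_union_le X.1 X.2
    simp only [sz]; omega
  have b01 : ∀ (p : Prop) [Decidable p], (if p then 0 else 1 : ℕ) ≤ 1 := by
    intro p _; split_ifs <;> omega
  have lam_half : ∀ X, lam X / 2 = if sz X ≤ 2 * k - 2 then sz X else 2 * k - 2 + col X := by
    intro X
    have h1 := b01 (mn X ∈ X.1)
    have h2 := b01 (P X)
    simp only [lam]
    by_cases h : sz X ≤ 2 * k - 2
    · rw [if_pos h, if_pos h]; omega
    · rw [if_neg h, if_neg h]; omega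
  refine tucker n (by omega) lam ?_ ?_ ?_
  · intro X hX
    rw [lam_half, Finset.mem_Icc]
    have h1 := sz_pos X hX
    split_ifs with h
    · omega
    · have := col_rng X hX h
      omega
  · intro X hX
    simp only [lam, sz_swap, mn_swap, col_swap, Prod.fst_swap]
    by_cases h : sz X ≤ 2 * k - 2
    · rw [if_pos h, if_pos h]
      have hm := Finset.mem_union.1 (mn_mem X hX)
      by_cases h1 : mn X ∈ X.1
      · have h2 : mn X ∉ X.2 := Finset.disjoint_left.1 hX.2.2.1 h1
        rw [if_pos h1, if_neg h2]; unfold KL.flip; rw [if_pos (by omega)]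
      · have h2 : mn X ∈ X.2 := hm.resolve_left h1
        rw [if_neg h1, if_pos h2]; unfold KL.flip; rw [if_neg (by omega)]; omega
    · rw [if_neg h, if_neg h]
      obtain ⟨S, hS1, hS2, hS3⟩ := col_mem X h
      by_cases h1 : P X
      · have h2 : ¬ P X.swap := by
          rintro ⟨T, hT1, hT2, hT3⟩
          obtain ⟨U, hU1, hU2, hU3⟩ := h1
          refine hcon' U T (hU2.trans hX.1) (hT2.trans hX.2.1) hU1 hT1
            (Finset.disjoint_of_subset_left hU2 (Finset.disjoint_of_subset_right hT2 hX.2.2.1)) ?_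
          rw [hU3, hT3, col_swap]
        rw [if_pos h1, if_neg h2]; unfold KL.flip; rw [if_pos (by omega)]
      · have h2 : P X.swap := by
          refine ⟨S, hS1, ?_, by rw [hS3, col_swap]⟩
          exact hS2.resolve_left fun h3 => h1 ⟨S, hS1, h3, hS3⟩
        rw [if_neg h1, if_pos h2]; unfold KL.flip; rw [if_neg (by omega)]; omega
  · intro X Y hX hY hXY heq
    have heq' := heq
    rw [lam_half, lam_half] at heq'
    by_cases h : sz X ≤ 2 * k - 2 <;> by_cases h' : sz Y ≤ 2 * k - 2
    · rw [if_pos h, if_pos h'] at heq'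
      have c1 := Finset.card_le_card hXY.1
      have c2 := Finset.card_le_card hXY.2
      simp only [sz] at heq'
      have e1 := Finset.eq_of_subset_of_card_le hXY.1 (by omega)
      have e2 := Finset.eq_of_subset_of_card_le hXY.2 (by omega)
      rw [Prod.ext e1 e2]
    · rw [if_pos h, if_neg h'] at heq'
      have := col_rng Y hY h'
      omega
    · rw [if_neg h, if_pos h'] at heq'
      have := col_rng X hX h
      omega
    · rw [if_neg h, if_neg h'] at heq'
      have hcol : col X = col Y := by omega
      have hP : P X ↔ P Y := by
        constructor
        · rintro ⟨S, h1, h2, h3⟩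
          exact ⟨S, h1, h2.trans hXY.1, h3.trans hcol⟩
        · rintro ⟨T, hT1, hT2, hT3⟩
          by_contra hnP
          obtain ⟨S, hS1, hS2, hS3⟩ := col_mem X h
          have hS2' : S ⊆ X.2 := hS2.resolve_left fun h3 => hnP ⟨S, hS1, h3, hS3⟩
          have hSY : S ⊆ Y.2 := hS2'.trans hXY.2
          refine hcon' T S (hT2.trans hY.1) (hSY.trans hY.2.1) hT1 hS1
            (Finset.disjoint_of_subset_left hT2 (Finset.disjoint_of_subset_right hSY hY.2.2.1)) ?_
          rw [hT3, hS3, hcol]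
      simp only [lam]
      rw [if_neg h, if_neg h', hcol]
      simp only [hP]
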